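/- arXiv:2509.14521 — 2 statements merged into one kernel-verified Lean document; each statement's English description precedes it below -/
import Mathlib

section
/- Let d ≥ 1, N ≥ 1, let K be a d×d real matrix with all entries strictly positive, and let μ_1, …, μ_N ∈ ℝ^d have strictly positive entries. Define the full Sinkhorn barycenter cycle F on vectors v ∈ ℝ^d with strictly positive entries by: u_i(v) = μ_i ⊘ (K v) (coordinatewise division) for i = 1, …, N, and F(v)_j = (∏_{i=1}^N (Kᵀ u_i(v))_j)^{1/N}. Then for all strictly positive v, v' ∈ ℝ^d, d_H(F(v), F(v')) ≤ tanh(Δ(K)/4) · tanh(Δ(Kᵀ)/4) · d_H(v, v'); in particular one full barycenter cycle is a Hilbert-metric contraction with factor independent of N. -/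
/-- The Hilbert projective metric on strictly positive vectors:
`d_H(x, y) = log (max_j x_j / y_j) - log (min_j x_j / y_j)`. -/
noncomputable def hilbertDist {d : ℕ} (x y : Fin d → ℝ) : ℝ :=
  Real.log (⨆ j, x j / y j) - Real.log (⨅ j, x j / y j)

/-- The projective diameter of a strictly positive matrix:
`Δ(M) = max_{j,j'} ( max_ℓ log(M_{ℓj}/M_{ℓj'}) - min_ℓ log(M_{ℓj}/M_{ℓj'}) )`. -/
noncomputable def projDiam {d : ℕ} (M : Matrix (Fin d) (Fin d) ℝ) : ℝ :=
  ⨆ j, ⨆ j', ((⨆ l, Real.log (M l j / M l j')) - ⨅ l, Real.log (M l j / M l j'))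

/-- The per-agent Sinkhorn scaling update `u_i(v) = μ_i ⊘ (K v)`. -/
noncomputable def sinkhornU {d : ℕ} (K : Matrix (Fin d) (Fin d) ℝ)
    (μ : Fin d → ℝ) (v : Fin d → ℝ) : Fin d → ℝ :=
  fun l => μ l / K.mulVec v l

/-- One full Sinkhorn barycenter cycle:
`F(v)_j = (∏_{i=1}^N (Kᵀ u_i(v))_j)^{1/N}` with `u_i(v) = μ_i ⊘ (K v)`. -/
noncomputable def barycenterCycle {d N : ℕ} (K : Matrix (Fin d) (Fin d) ℝ)
    (μ : Fin N → Fin d → ℝ) (v : Fin d → ℝ) : Fin d → ℝ :=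
  fun j => (∏ i, K.transpose.mulVec (sinkhornU K (μ i) v) j) ^ ((1 : ℝ) / N)

/-!
Write `x = y · exp τ`, so that `d_H(x, y)` is the oscillation `max τ - min τ`. For two rows `p`, `q`
of `M · diag y`, the derivative in `s` of `log ∑ p_j exp (s τ_j) - log ∑ q_j exp (s τ_j)` is a
difference of two means of `τ`, hence at most the total variation distance of the two averaging
weights times the oscillation of `τ`. The tilting by `exp (s τ_j)` does not change the cross ratios
`p_j q_k / (p_k q_j) ≤ exp Δ(M)`. Summing this bound over an event and its complement bounds the
odds ratio of the two probabilities `P`, `Q` of the event by `exp Δ(M)`, which forces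
`P - Q ≤ tanh (Δ(M) / 4)`. Integrating over `s ∈ [0, 1]` yields Birkhoff's contraction theorem.

The cycle applies `K`, an entrywise inversion, a diagonal scaling, `Kᵀ` and a geometric mean. The
inversion and the scaling are isometries, and the geometric mean is a convex combination on the
logarithmic scale, so only `K` and `Kᵀ` contribute to the contraction factor.
-/

section Oscillation

variable {ι : Type*}

/-- The oscillation `max f - min f` of a real function on a finite type; the Hilbert metric is the
oscillation of a difference of logarithms. It is `0` on the empty type. -/
noncomputable def osc (f : ι → ℝ) : ℝ :=
  (⨆ i, f i) - ⨅ i, f i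

lemma sub_le_osc [Finite ι] (f : ι → ℝ) (i j : ι) : f i - f j ≤ osc f :=
  sub_le_sub (le_ciSup (Set.finite_range f).bddAbove i) (ciInf_le (Set.finite_range f).bddBelow j)

lemma osc_le [Finite ι] [Nonempty ι] {f : ι → ℝ} {D : ℝ} (h : ∀ i j, f i - f j ≤ D) :
    osc f ≤ D := by
  obtain ⟨i, hi⟩ := exists_eq_ciSup_of_finite (f := f)
  obtain ⟨j, hj⟩ := exists_eq_ciInf_of_finite (f := f)
  rw [osc, ← hi, ← hj]
  exact h i j

lemma osc_nonneg [Finite ι] [Nonempty ι] (f : ι → ℝ) : 0 ≤ osc f := by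
  obtain ⟨i⟩ := ‹Nonempty ι›
  simpa only [sub_self] using sub_le_osc f i i

lemma osc_neg [Finite ι] [Nonempty ι] (f : ι → ℝ) : osc (-f) = osc f := by
  have osc_neg_le (g : ι → ℝ) : osc (-g) ≤ osc g :=
    osc_le fun i j => by simpa only [Pi.neg_apply, neg_sub_neg] using sub_le_osc g j i
  exact (osc_neg_le f).antisymm (by simpa only [neg_neg] using osc_neg_le (-f))

lemma osc_sum_mul_le [Finite ι] [Nonempty ι] {κ : Type*} (s : Finset κ) {w : κ → ℝ}
    (hw : ∀ i ∈ s, 0 ≤ w i) (f : κ → ι → ℝ) :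
    osc (fun j => ∑ i ∈ s, w i * f i j) ≤ ∑ i ∈ s, w i * osc (f i) := by
  refine osc_le fun j k => ?_
  rw [← Finset.sum_sub_distrib]
  refine Finset.sum_le_sum fun i hi => ?_
  rw [← mul_sub]
  exact mul_le_mul_of_nonneg_left (sub_le_osc (f i) j k) (hw i hi)

end Oscillation

section TotalVariation

lemma tanh_nonneg {t : ℝ} (ht : 0 ≤ t) : 0 ≤ Real.tanh t := by
  rw [Real.tanh_eq_sinh_div_cosh]
  exact div_nonneg (Real.sinh_nonneg_iff.2 ht) (Real.cosh_pos t).le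

lemma sub_le_tanh_mul_add {a b t : ℝ} (h : a ≤ Real.exp (2 * t) * b) :
    a - b ≤ Real.tanh t * (a + b) := by
  have hexp : a * Real.exp (-t) ≤ b * Real.exp t := by
    calc a * Real.exp (-t) ≤ Real.exp (2 * t) * b * Real.exp (-t) := by gcongr
      _ = b * Real.exp (2 * t + -t) := by rw [Real.exp_add]; ring
      _ = b * Real.exp t := by ring_nf
  rw [← Real.cosh_sub_sinh, ← Real.cosh_add_sinh] at hexp
  rw [Real.tanh_eq_sinh_div_cosh, div_mul_eq_mul_div, le_div_iff₀ (Real.cosh_pos t)]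
  linarith

lemma sub_le_tanh_of_odds_le {P Q Δ : ℝ} (hP : P ∈ Set.Icc 0 1) (hQ : Q ∈ Set.Icc 0 1)
    (hΔ : 0 ≤ Δ) (h : P * (1 - Q) ≤ Real.exp Δ * (Q * (1 - P))) :
    P - Q ≤ Real.tanh (Δ / 4) := by
  obtain ⟨hP0, hP1⟩ := hP
  obtain ⟨hQ0, hQ1⟩ := hQ
  rw [← sub_nonneg] at hP1 hQ1
  set a := √(P * (1 - Q))
  set b := √(Q * (1 - P)) with hb
  have ha_sq : a ^ 2 = P * (1 - Q) := Real.sq_sqrt (by positivity)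
  have hb_sq : b ^ 2 = Q * (1 - P) := Real.sq_sqrt (by positivity)
  have hab : a ≤ Real.exp (2 * (Δ / 4)) * b := by
    rw [show 2 * (Δ / 4) = Δ / 2 by ring, Real.exp_half, hb, ← Real.sqrt_mul (Real.exp_pos Δ).le]
    exact Real.sqrt_le_sqrt h
  have hadd : a + b ≤ 1 := by
    have hamgm (x y : ℝ) (hx : 0 ≤ x) (hy : 0 ≤ y) : √(x * y) ≤ (x + y) / 2 :=
      Real.sqrt_le_iff.2 ⟨by positivity, by nlinarith [sq_nonneg (x - y)]⟩
    linarith [hamgm P (1 - Q) hP0 hQ1, hamgm Q (1 - P) hQ0 hP1]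
  calc P - Q = (a - b) * (a + b) := by linear_combination hb_sq - ha_sq
    _ ≤ Real.tanh (Δ / 4) * (a + b) * (a + b) := by gcongr; exact sub_le_tanh_mul_add hab
    _ ≤ Real.tanh (Δ / 4) * 1 * 1 := by
        have := tanh_nonneg (show 0 ≤ Δ / 4 by positivity)
        gcongr
    _ = Real.tanh (Δ / 4) := by ring

variable {ι : Type*}

lemma sum_mul_sum_le_of_cross_le {p q : ι → ℝ} {C : ℝ}
    (hcross : ∀ j k, p j * q k ≤ C * (p k * q j)) (A B : Finset ι) :
    (∑ j ∈ A, p j) * ∑ k ∈ B, q k ≤ C * ((∑ j ∈ A, q j) * ∑ k ∈ B, p k) := by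
  rw [Finset.sum_mul_sum, Finset.sum_mul_sum]
  simp only [Finset.mul_sum]
  exact Finset.sum_le_sum fun j _ => Finset.sum_le_sum fun k _ =>
    (hcross j k).trans_eq (by rw [mul_comm (p k)])

variable [Fintype ι] {p q : ι → ℝ} {Δ : ℝ}

lemma sum_sub_sum_le_tanh (hp : ∀ j, 0 ≤ p j) (hq : ∀ j, 0 ≤ q j)
    (hp_sum : ∑ j, p j = 1) (hq_sum : ∑ j, q j = 1)
    (hcross : ∀ j k, p j * q k ≤ Real.exp Δ * (p k * q j)) (A : Finset ι) :
    ∑ j ∈ A, p j - ∑ j ∈ A, q j ≤ Real.tanh (Δ / 4) := by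
  classical
  have sum_compl (w : ι → ℝ) (hw : ∑ j, w j = 1) : 1 - ∑ j ∈ A, w j = ∑ j ∈ Aᶜ, w j := by
    rw [← hw, ← Finset.sum_add_sum_compl A w, add_sub_cancel_left]
  have sum_mem_Icc (w : ι → ℝ) (hw0 : ∀ j, 0 ≤ w j) (hw : ∑ j, w j = 1) :
      ∑ j ∈ A, w j ∈ Set.Icc 0 1 :=
    ⟨Finset.sum_nonneg fun j _ => hw0 j,
      sub_nonneg.1 (sum_compl w hw ▸ Finset.sum_nonneg fun j _ => hw0 j)⟩
  have hΔ : 0 ≤ Δ := by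
    rw [← Real.one_le_exp_iff]
    simpa only [hp_sum, hq_sum, mul_one] using
      sum_mul_sum_le_of_cross_le hcross Finset.univ Finset.univ
  refine sub_le_tanh_of_odds_le (sum_mem_Icc p hp hp_sum) (sum_mem_Icc q hq hq_sum) hΔ ?_
  rw [sum_compl p hp_sum, sum_compl q hq_sum]
  exact sum_mul_sum_le_of_cross_le hcross A Aᶜ

lemma sum_mul_sub_sum_mul_le_mul_osc (hpq : ∑ j, p j = ∑ j, q j) (f : ι → ℝ) :
    ∑ j, p j * f j - ∑ j, q j * f j ≤
      (∑ j with q j < p j, p j - ∑ j with q j < p j, q j) * osc f := by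
  set m := ⨅ j, f j
  have hm_le (j : ι) : m ≤ f j := ciInf_le (Set.finite_range f).bddBelow j
  have hle_osc (j : ι) : f j - m ≤ osc f :=
    sub_le_sub_right (le_ciSup (Set.finite_range f).bddAbove j) m
  calc ∑ j, p j * f j - ∑ j, q j * f j = ∑ j, (p j - q j) * (f j - m) := by
        simp only [sub_mul, mul_sub, Finset.sum_sub_distrib, ← Finset.sum_mul, hpq]
        ring
    _ ≤ ∑ j with q j < p j, (p j - q j) * (f j - m) := by
        rw [Finset.sum_filter]
        refine Finset.sum_le_sum fun j _ => ?_
        split_ifs with hj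
        · exact le_rfl
        · exact mul_nonpos_of_nonpos_of_nonneg (by linarith) (sub_nonneg.2 (hm_le j))
    _ ≤ ∑ j with q j < p j, (p j - q j) * osc f := by
        refine Finset.sum_le_sum fun j hj => mul_le_mul_of_nonneg_left (hle_osc j) ?_
        exact sub_nonneg.2 (Finset.mem_filter.1 hj).2.le
    _ = _ := by rw [← Finset.sum_mul, Finset.sum_sub_distrib]

lemma centerMass_sub_centerMass_le_tanh_mul_osc [Nonempty ι]
    (hp : ∀ j, 0 < p j) (hq : ∀ j, 0 < q j)
    (hcross : ∀ j k, p j * q k ≤ Real.exp Δ * (p k * q j)) (f : ι → ℝ) :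
    Finset.univ.centerMass p f - Finset.univ.centerMass q f ≤ Real.tanh (Δ / 4) * osc f := by
  set P := ∑ j, p j
  set Q := ∑ j, q j
  have hP : 0 < P := Finset.sum_pos (fun j _ => hp j) Finset.univ_nonempty
  have hQ : 0 < Q := Finset.sum_pos (fun j _ => hq j) Finset.univ_nonempty
  have hp_sum : ∑ j, p j / P = 1 := by rw [← Finset.sum_div, div_self hP.ne']
  have hq_sum : ∑ j, q j / Q = 1 := by rw [← Finset.sum_div, div_self hQ.ne']
  have hcross_div (j k : ι) : p j / P * (q k / Q) ≤ Real.exp Δ * (p k / P * (q j / Q)) := by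
    rw [div_mul_div_comm, div_mul_div_comm, mul_div_assoc']
    exact div_le_div_of_nonneg_right (hcross j k) (mul_pos hP hQ).le
  have centerMass_eq (w : ι → ℝ) :
      Finset.univ.centerMass w f = ∑ j, w j / (∑ k, w k) * f j := by
    simp only [Finset.centerMass, smul_eq_mul, Finset.mul_sum, div_eq_inv_mul, mul_assoc]
  rw [centerMass_eq, centerMass_eq]
  refine (sum_mul_sub_sum_mul_le_mul_osc (hp_sum.trans hq_sum.symm) f).trans ?_
  exact mul_le_mul_of_nonneg_right
    (sum_sub_sum_le_tanh (fun j => (div_pos (hp j) hP).le) (fun j => (div_pos (hq j) hQ).le)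
      hp_sum hq_sum hcross_div _) (osc_nonneg f)

end TotalVariation

section LogSumExp

variable {ι : Type*} [Fintype ι]

lemma hasDerivAt_log_sum_mul_exp {w τ : ι → ℝ} {s : ℝ}
    (h : ∑ j, w j * Real.exp (s * τ j) ≠ 0) :
    HasDerivAt (fun s => Real.log (∑ j, w j * Real.exp (s * τ j)))
      (Finset.univ.centerMass (fun j => w j * Real.exp (s * τ j)) τ) s := by
  have hterm (j : ι) : HasDerivAt (fun s => w j * Real.exp (s * τ j))
      (w j * Real.exp (s * τ j) * τ j) s := by
    simpa only [mul_assoc] using ((hasDerivAt_mul_const (τ j)).exp).const_mul (w j)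
  refine ((HasDerivAt.fun_sum fun j _ => hterm j).log h).congr_deriv ?_
  simp only [Finset.centerMass, smul_eq_mul, div_eq_inv_mul]

lemma log_sum_mul_exp_sub_le_tanh_mul_osc [Nonempty ι] {p q : ι → ℝ} {Δ : ℝ}
    (hp : ∀ j, 0 < p j) (hq : ∀ j, 0 < q j)
    (hcross : ∀ j k, p j * q k ≤ Real.exp Δ * (p k * q j)) (τ : ι → ℝ) :
    (Real.log (∑ j, p j * Real.exp (τ j)) - Real.log (∑ j, q j * Real.exp (τ j))) -
      (Real.log (∑ j, p j) - Real.log (∑ j, q j)) ≤ Real.tanh (Δ / 4) * osc τ := by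
  have tilt_pos {w : ι → ℝ} (hw : ∀ j, 0 < w j) (s : ℝ) (j : ι) : 0 < w j * Real.exp (s * τ j) :=
    mul_pos (hw j) (Real.exp_pos _)
  have hderiv {w : ι → ℝ} (hw : ∀ j, 0 < w j) (s : ℝ) :=
    hasDerivAt_log_sum_mul_exp
      (Finset.sum_pos (fun j _ => tilt_pos hw s j) Finset.univ_nonempty).ne'
  have hderiv_sub (s : ℝ) := (hderiv hp s).sub (hderiv hq s)
  obtain ⟨s, -, hs⟩ := exists_hasDerivAt_eq_slope _ _ zero_lt_one
    (fun s _ => (hderiv_sub s).continuousAt.continuousWithinAt) (fun s _ => hderiv_sub s)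
  have hcross_tilt (j k : ι) : p j * Real.exp (s * τ j) * (q k * Real.exp (s * τ k)) ≤
      Real.exp Δ * (p k * Real.exp (s * τ k) * (q j * Real.exp (s * τ j))) :=
    calc _ = p j * q k * (Real.exp (s * τ j) * Real.exp (s * τ k)) := by ring
      _ ≤ Real.exp Δ * (p k * q j) * (Real.exp (s * τ j) * Real.exp (s * τ k)) :=
          mul_le_mul_of_nonneg_right (hcross j k) (by positivity)
      _ = _ := by ring
  have hmean := centerMass_sub_centerMass_le_tanh_mul_osc (tilt_pos hp s) (tilt_pos hq s)
    hcross_tilt τ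
  rw [hs] at hmean
  simpa only [Pi.sub_apply, one_mul, zero_mul, Real.exp_zero, mul_one, sub_zero, div_one]
    using hmean

end LogSumExp

section HilbertMetric

lemma log_ciSup {ι : Type*} [Finite ι] [Nonempty ι] {f : ι → ℝ} (hf : ∀ i, 0 < f i) :
    Real.log (⨆ i, f i) = ⨆ i, Real.log (f i) := by
  obtain ⟨a, ha⟩ := exists_eq_ciSup_of_finite (f := f)
  have hle (i : ι) : f i ≤ f a := ha ▸ le_ciSup (Set.finite_range f).bddAbove i
  rw [← ha]
  exact (le_ciSup (f := fun i => Real.log (f i)) (Set.finite_range _).bddAbove a).antisymm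
    (ciSup_le fun i => Real.log_le_log (hf i) (hle i))

lemma log_ciInf {ι : Type*} [Finite ι] [Nonempty ι] {f : ι → ℝ} (hf : ∀ i, 0 < f i) :
    Real.log (⨅ i, f i) = ⨅ i, Real.log (f i) := by
  obtain ⟨a, ha⟩ := exists_eq_ciInf_of_finite (f := f)
  have hle (i : ι) : f a ≤ f i := ha ▸ ciInf_le (Set.finite_range f).bddBelow i
  rw [← ha]
  exact (le_ciInf fun i => Real.log_le_log (hf a) (hle i)).antisymm
    (ciInf_le (f := fun i => Real.log (f i)) (Set.finite_range _).bddBelow a)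

variable {d : ℕ} [NeZero d]

lemma hilbertDist_eq_osc_log {x y : Fin d → ℝ} (hx : ∀ j, 0 < x j) (hy : ∀ j, 0 < y j) :
    hilbertDist x y = osc fun j => Real.log (x j) - Real.log (y j) := by
  have hpos (j : Fin d) : 0 < x j / y j := div_pos (hx j) (hy j)
  rw [hilbertDist, log_ciSup hpos, log_ciInf hpos, osc]
  simp only [Real.log_div (hx _).ne' (hy _).ne']

lemma hilbertDist_comm {x y : Fin d → ℝ} (hx : ∀ j, 0 < x j) (hy : ∀ j, 0 < y j) :
    hilbertDist x y = hilbertDist y x := by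
  rw [hilbertDist_eq_osc_log hx hy, hilbertDist_eq_osc_log hy hx, ← osc_neg]
  exact congrArg osc (funext fun j => neg_sub _ _)

lemma hilbertDist_div_div {m x y : Fin d → ℝ} (hm : ∀ j, m j ≠ 0) (hx : ∀ j, 0 < x j)
    (hy : ∀ j, 0 < y j) :
    hilbertDist (fun j => m j / x j) (fun j => m j / y j) = hilbertDist x y := by
  rw [hilbertDist_comm hx hy]
  simp only [hilbertDist, div_div_div_cancel_left' _ _ (hm _)]

lemma hilbertDist_prod_rpow_le {κ : Type*} (s : Finset κ) {w : κ → ℝ} (hw : ∀ i ∈ s, 0 ≤ w i)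
    {x y : κ → Fin d → ℝ} (hx : ∀ i ∈ s, ∀ j, 0 < x i j) (hy : ∀ i ∈ s, ∀ j, 0 < y i j) :
    hilbertDist (fun j => ∏ i ∈ s, x i j ^ w i) (fun j => ∏ i ∈ s, y i j ^ w i) ≤
      ∑ i ∈ s, w i * hilbertDist (x i) (y i) := by
  have prod_pos {z : κ → Fin d → ℝ} (hz : ∀ i ∈ s, ∀ j, 0 < z i j) (j : Fin d) :
      0 < ∏ i ∈ s, z i j ^ w i :=
    Finset.prod_pos fun i hi => Real.rpow_pos_of_pos (hz i hi j) _
  have log_prod {z : κ → Fin d → ℝ} (hz : ∀ i ∈ s, ∀ j, 0 < z i j) (j : Fin d) :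
      Real.log (∏ i ∈ s, z i j ^ w i) = ∑ i ∈ s, w i * Real.log (z i j) := by
    rw [Real.log_prod fun i hi => (Real.rpow_pos_of_pos (hz i hi j) _).ne']
    exact Finset.sum_congr rfl fun i hi => Real.log_rpow (hz i hi j) _
  rw [hilbertDist_eq_osc_log (prod_pos hx) (prod_pos hy)]
  simp only [log_prod hx, log_prod hy, ← Finset.sum_sub_distrib, ← mul_sub]
  refine (osc_sum_mul_le s hw fun i j => Real.log (x i j) - Real.log (y i j)).trans_eq ?_
  exact Finset.sum_congr rfl fun i hi => by rw [hilbertDist_eq_osc_log (hx i hi) (hy i hi)]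

end HilbertMetric

section Birkhoff

lemma mulVec_pos {ι κ : Type*} [Fintype κ] [Nonempty κ] {M : Matrix ι κ ℝ}
    (hM : ∀ l j, 0 < M l j) {x : κ → ℝ} (hx : ∀ j, 0 < x j) (l : ι) : 0 < M.mulVec x l :=
  Finset.sum_pos (fun j _ => mul_pos (hM l j) (hx j)) Finset.univ_nonempty

variable {d : ℕ}

lemma log_div_sub_log_div_le_projDiam (M : Matrix (Fin d) (Fin d) ℝ) (l m j k : Fin d) :
    Real.log (M l j / M l k) - Real.log (M m j / M m k) ≤ projDiam M :=
  calc _ ≤ osc fun l => Real.log (M l j / M l k) := sub_le_osc _ l m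
    _ ≤ ⨆ k, osc fun l => Real.log (M l j / M l k) :=
        le_ciSup (f := fun k => osc fun l => Real.log (M l j / M l k))
          (Set.finite_range _).bddAbove k
    _ ≤ projDiam M :=
        le_ciSup (f := fun j => ⨆ k, osc fun l => Real.log (M l j / M l k))
          (Set.finite_range _).bddAbove j

lemma projDiam_nonneg [NeZero d] (M : Matrix (Fin d) (Fin d) ℝ) : 0 ≤ projDiam M := by
  simpa only [sub_self] using log_div_sub_log_div_le_projDiam M 0 0 0 0

variable {M : Matrix (Fin d) (Fin d) ℝ}

lemma mul_le_exp_projDiam_mul (hM : ∀ l j, 0 < M l j) (l m j k : Fin d) :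
    M l j * M m k ≤ Real.exp (projDiam M) * (M l k * M m j) := by
  have hlog := log_div_sub_log_div_le_projDiam M l m j k
  have hl : 0 < M l j / M l k := div_pos (hM l j) (hM l k)
  have hm : 0 < M m j / M m k := div_pos (hM m j) (hM m k)
  rwa [← Real.log_div hl.ne' hm.ne', Real.log_le_iff_le_exp (div_pos hl hm), div_div_div_eq,
    div_le_iff₀ (mul_pos (hM l k) (hM m j))] at hlog

theorem hilbertDist_mulVec_le [NeZero d] (hM : ∀ l j, 0 < M l j) {x y : Fin d → ℝ}
    (hx : ∀ j, 0 < x j) (hy : ∀ j, 0 < y j) :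
    hilbertDist (M.mulVec x) (M.mulVec y) ≤ Real.tanh (projDiam M / 4) * hilbertDist x y := by
  rw [hilbertDist_eq_osc_log (mulVec_pos hM hx) (mulVec_pos hM hy), hilbertDist_eq_osc_log hx hy]
  refine osc_le fun l m => ?_
  have hcross (j k : Fin d) : M l j * y j * (M m k * y k) ≤
      Real.exp (projDiam M) * (M l k * y k * (M m j * y j)) :=
    calc _ = M l j * M m k * (y j * y k) := by ring
      _ ≤ Real.exp (projDiam M) * (M l k * M m j) * (y j * y k) :=
          mul_le_mul_of_nonneg_right (mul_le_exp_projDiam_mul hM l m j k)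
            (mul_pos (hy j) (hy k)).le
      _ = _ := by ring
  have hrows := log_sum_mul_exp_sub_le_tanh_mul_osc
    (fun j => mul_pos (hM l j) (hy j)) (fun j => mul_pos (hM m j) (hy j)) hcross
    (fun j => Real.log (x j) - Real.log (y j))
  have hexp (j : Fin d) : y j * Real.exp (Real.log (x j) - Real.log (y j)) = x j := by
    rw [Real.exp_sub, Real.exp_log (hx j), Real.exp_log (hy j), mul_div_cancel₀ _ (hy j).ne']
  simp only [mul_assoc, hexp] at hrows
  change Real.log (M.mulVec x l) - Real.log (M.mulVec x m) -
    (Real.log (M.mulVec y l) - Real.log (M.mulVec y m)) ≤ _ at hrows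
  rwa [sub_sub_sub_comm]

end Birkhoff

section BarycenterCycle

variable {d N : ℕ} [NeZero d] {K : Matrix (Fin d) (Fin d) ℝ}

lemma sinkhornU_pos (hK : ∀ l j, 0 < K l j) {m v : Fin d → ℝ} (hm : ∀ l, 0 < m l)
    (hv : ∀ j, 0 < v j) (l : Fin d) : 0 < sinkhornU K m v l :=
  div_pos (hm l) (mulVec_pos hK hv l)

lemma hilbertDist_transpose_mulVec_sinkhornU_le (hK : ∀ l j, 0 < K l j) {m v v' : Fin d → ℝ}
    (hm : ∀ l, 0 < m l) (hv : ∀ j, 0 < v j) (hv' : ∀ j, 0 < v' j) :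
    hilbertDist (K.transpose.mulVec (sinkhornU K m v)) (K.transpose.mulVec (sinkhornU K m v')) ≤
      Real.tanh (projDiam K / 4) * Real.tanh (projDiam K.transpose / 4) * hilbertDist v v' :=
  calc _ ≤ Real.tanh (projDiam K.transpose / 4) *
          hilbertDist (sinkhornU K m v) (sinkhornU K m v') :=
        hilbertDist_mulVec_le (fun l j => hK j l) (sinkhornU_pos hK hm hv) (sinkhornU_pos hK hm hv')
    _ = Real.tanh (projDiam K.transpose / 4) * hilbertDist (K.mulVec v) (K.mulVec v') := by
        unfold sinkhornU
        rw [hilbertDist_div_div (fun l => (hm l).ne') (mulVec_pos hK hv) (mulVec_pos hK hv')]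
    _ ≤ Real.tanh (projDiam K.transpose / 4) * (Real.tanh (projDiam K / 4) * hilbertDist v v') :=
        mul_le_mul_of_nonneg_left (hilbertDist_mulVec_le hK hv hv')
          (tanh_nonneg (div_nonneg (projDiam_nonneg _) zero_le_four))
    _ = _ := by ring

lemma hilbertDist_barycenterCycle_le_sum (hK : ∀ l j, 0 < K l j) {μ : Fin N → Fin d → ℝ}
    (hμ : ∀ i l, 0 < μ i l) {v v' : Fin d → ℝ} (hv : ∀ j, 0 < v j) (hv' : ∀ j, 0 < v' j) :
    hilbertDist (barycenterCycle K μ v) (barycenterCycle K μ v') ≤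
      ∑ i, (1 : ℝ) / N * hilbertDist (K.transpose.mulVec (sinkhornU K (μ i) v))
        (K.transpose.mulVec (sinkhornU K (μ i) v')) := by
  have hpos {w : Fin d → ℝ} (hw : ∀ j, 0 < w j) (i : Fin N) (j : Fin d) :
      0 < K.transpose.mulVec (sinkhornU K (μ i) w) j :=
    mulVec_pos (fun l j => hK j l) (sinkhornU_pos hK (hμ i) hw) j
  have barycenterCycle_eq {w : Fin d → ℝ} (hw : ∀ j, 0 < w j) : barycenterCycle K μ w =
      fun j => ∏ i, K.transpose.mulVec (sinkhornU K (μ i) w) j ^ ((1 : ℝ) / N) :=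
    funext fun j => (Real.finsetProd_rpow _ _ (fun i _ => (hpos hw i j).le) _).symm
  rw [barycenterCycle_eq hv, barycenterCycle_eq hv']
  exact hilbertDist_prod_rpow_le Finset.univ (fun _ _ => by positivity)
    (fun i _ => hpos hv i) (fun i _ => hpos hv' i)

end BarycenterCycle

/-- One full Sinkhorn barycenter cycle is a Hilbert-metric contraction with
factor `tanh(Δ(K)/4) · tanh(Δ(Kᵀ)/4)`, independent of the number of agents `N`. -/
theorem barycenterCycle_hilbert_contraction {d N : ℕ} (hd : 1 ≤ d) (hN : 1 ≤ N)
    (K : Matrix (Fin d) (Fin d) ℝ) (hK : ∀ l j, 0 < K l j)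
    (μ : Fin N → Fin d → ℝ) (hμ : ∀ i l, 0 < μ i l) :
    ∀ v v' : Fin d → ℝ, (∀ j, 0 < v j) → (∀ j, 0 < v' j) →
      hilbertDist (barycenterCycle K μ v) (barycenterCycle K μ v') ≤
        Real.tanh (projDiam K / 4) * Real.tanh (projDiam K.transpose / 4) *
          hilbertDist v v' := by
  intro v v' hv hv'
  have : NeZero d := ⟨Nat.one_le_iff_ne_zero.1 hd⟩
  have hN0 : (N : ℝ) ≠ 0 := Nat.cast_ne_zero.2 (Nat.one_le_iff_ne_zero.1 hN)
  calc hilbertDist (barycenterCycle K μ v) (barycenterCycle K μ v')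
      ≤ ∑ i, (1 : ℝ) / N * hilbertDist (K.transpose.mulVec (sinkhornU K (μ i) v))
          (K.transpose.mulVec (sinkhornU K (μ i) v')) :=
        hilbertDist_barycenterCycle_le_sum hK hμ hv hv'
    _ ≤ ∑ _i : Fin N, (1 : ℝ) / N * (Real.tanh (projDiam K / 4) *
          Real.tanh (projDiam K.transpose / 4) * hilbertDist v v') := by
        gcongr with i
        exact hilbertDist_transpose_mulVec_sinkhornU_le hK (hμ i) hv hv'
    _ = Real.tanh (projDiam K / 4) * Real.tanh (projDiam K.transpose / 4) * hilbertDist v v' := by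
        rw [Finset.sum_const, Finset.card_fin, nsmul_eq_mul, ← mul_assoc, mul_one_div_cancel hN0,
          one_mul]
end

section
/- Let d ≥ 1, let 0 < v_min ≤ 2 and v_max ≥ v_min, and let x, y ∈ ℝ^d satisfy v_min ≤ x_j ≤ v_max and v_min ≤ y_j ≤ v_max for all j. If d_H(x, y) ≤ γ for some γ ≥ 0, then the normalizations p = x / ⟨1, x⟩ and q = y / ⟨1, y⟩ satisfy ‖p − q‖₁ ≤ (2 / v_min) · (e^γ − 1). -/
/-- Normalization of a vector to a probability vector: `x / ⟨1, x⟩`. -/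
noncomputable def normalizeVec {d : ℕ} (x : Fin d → ℝ) : Fin d → ℝ :=
  fun j => x j / ∑ k, x k

/-! The metric controls all cross ratios: `x i * y k ≤ C * (y i * x k)` with `C = exp (d_H(x, y))`.
Summing over `k` compares the normalizations `p` and `q` entrywise, `p ≤ C * q` and symmetrically
`q ≤ C * p`. Since `C ≥ 1`, this gives `|p j - q j| ≤ (C - 1) * q j`, and the entries of `q` add up
to `1`. -/

lemma abs_sub_le_sub_one_mul {R : Type*} [CommRing R] [LinearOrder R] [IsStrictOrderedRing R]
    {a b C : R} (hC : 1 ≤ C) (hab : a ≤ C * b) (hba : b ≤ C * a) : |a - b| ≤ (C - 1) * b := by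
  rcases le_total a b with h | h
  · calc |a - b| = b - a := by rw [abs_sub_comm, abs_of_nonneg (sub_nonneg.2 h)]
      _ ≤ (C - 1) * a := by linarith
      _ ≤ (C - 1) * b := mul_le_mul_of_nonneg_left h (sub_nonneg.2 hC)
  · calc |a - b| = a - b := abs_of_nonneg (sub_nonneg.2 h)
      _ ≤ (C - 1) * b := by linarith

lemma lt_ciInf_of_finite {ι α : Type*} [Finite ι] [Nonempty ι] [ConditionallyCompleteLinearOrder α]
    {f : ι → α} {a : α} (h : ∀ i, a < f i) : a < ⨅ i, f i := by
  obtain ⟨i, hi⟩ := exists_eq_ciInf_of_finite (f := f)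
  exact hi ▸ h i

section Normalization

variable {d : ℕ} {x y : Fin d → ℝ}

lemma sum_normalizeVec (hx : ∑ k, x k ≠ 0) : ∑ j, normalizeVec x j = 1 := by
  simp only [normalizeVec, ← Finset.sum_div, div_self hx]

lemma normalizeVec_le_mul_normalizeVec {C : ℝ} {i : Fin d} (hx : 0 < ∑ k, x k)
    (hy : 0 < ∑ k, y k) (h : ∀ k, x i * y k ≤ C * (y i * x k)) :
    normalizeVec x i ≤ C * normalizeVec y i := by
  have hsum : x i * ∑ k, y k ≤ C * y i * ∑ k, x k := by
    simpa only [Finset.mul_sum, mul_assoc] using Finset.sum_le_sum fun k _ => h k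
  rwa [normalizeVec, normalizeVec, ← mul_div_assoc, div_le_div_iff₀ hx hy]

end Normalization

section HilbertDist

variable {d : ℕ} {x y : Fin d → ℝ}

lemma hilbertDist_nonneg [Nonempty (Fin d)] (hx : ∀ j, 0 < x j) (hy : ∀ j, 0 < y j) :
    0 ≤ hilbertDist x y :=
  sub_nonneg.2 <| Real.log_le_log (lt_ciInf_of_finite fun j => div_pos (hx j) (hy j))
    (ciInf_le_ciSup (Finite.bddBelow_range _) (Finite.bddAbove_range _))

lemma iSup_div_eq_exp_hilbertDist_mul_iInf_div [Nonempty (Fin d)] (hx : ∀ j, 0 < x j)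
    (hy : ∀ j, 0 < y j) :
    ⨆ j, x j / y j = Real.exp (hilbertDist x y) * ⨅ j, x j / y j := by
  have hinf : 0 < ⨅ j, x j / y j := lt_ciInf_of_finite fun j => div_pos (hx j) (hy j)
  have hsup : 0 < ⨆ j, x j / y j :=
    hinf.trans_le (ciInf_le_ciSup (Finite.bddBelow_range _) (Finite.bddAbove_range _))
  rw [hilbertDist, Real.exp_sub, Real.exp_log hsup, Real.exp_log hinf, div_mul_cancel₀ _ hinf.ne']

lemma div_le_exp_hilbertDist_mul_div (hx : ∀ j, 0 < x j) (hy : ∀ j, 0 < y j) (i k : Fin d) :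
    x i / y i ≤ Real.exp (hilbertDist x y) * (x k / y k) := by
  have : Nonempty (Fin d) := ⟨i⟩
  calc x i / y i ≤ ⨆ j, x j / y j := Finite.le_ciSup (fun j => x j / y j) i
    _ = Real.exp (hilbertDist x y) * ⨅ j, x j / y j :=
      iSup_div_eq_exp_hilbertDist_mul_iInf_div hx hy
    _ ≤ Real.exp (hilbertDist x y) * (x k / y k) := by
      gcongr
      exact Finite.ciInf_le (fun j => x j / y j) k

lemma mul_le_exp_hilbertDist_mul (hx : ∀ j, 0 < x j) (hy : ∀ j, 0 < y j) (i k : Fin d) :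
    x i * y k ≤ Real.exp (hilbertDist x y) * (y i * x k) := by
  have hratio := div_le_exp_hilbertDist_mul_div hx hy i k
  rw [← mul_div_assoc, div_le_div_iff₀ (hy i) (hy k)] at hratio
  linarith

end HilbertDist

theorem hilbert_to_l1_bridge_range_general {d : ℕ} [Nonempty (Fin d)] {x y : Fin d → ℝ}
    (hx : ∀ j, 0 < x j) (hy : ∀ j, 0 < y j) :
    ∑ j, |normalizeVec x j - normalizeVec y j| ≤ Real.exp (hilbertDist x y) - 1 := by
  set C := Real.exp (hilbertDist x y)
  have hX : 0 < ∑ k, x k := Finset.sum_pos (fun j _ => hx j) Finset.univ_nonempty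
  have hY : 0 < ∑ k, y k := Finset.sum_pos (fun j _ => hy j) Finset.univ_nonempty
  have hcross : ∀ i k, x i * y k ≤ C * (y i * x k) := mul_le_exp_hilbertDist_mul hx hy
  have hC : 1 ≤ C := Real.one_le_exp (hilbertDist_nonneg hx hy)
  have hxy (j : Fin d) : normalizeVec x j ≤ C * normalizeVec y j :=
    normalizeVec_le_mul_normalizeVec hX hY (hcross j)
  have hyx (j : Fin d) : normalizeVec y j ≤ C * normalizeVec x j :=
    normalizeVec_le_mul_normalizeVec hY hX fun k => by linarith [hcross k j]
  calc ∑ j, |normalizeVec x j - normalizeVec y j|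
      ≤ ∑ j, (C - 1) * normalizeVec y j :=
        Finset.sum_le_sum fun j _ => abs_sub_le_sub_one_mul hC (hxy j) (hyx j)
    _ = C - 1 := by rw [← Finset.mul_sum, sum_normalizeVec hY.ne', mul_one]

/-- Range-aware Hilbert-to-`ℓ1` bridge: for vectors with entries in
`[v_min, v_max]`, `0 < v_min ≤ 2`, if `d_H(x, y) ≤ γ` then the normalizations
satisfy `‖p - q‖₁ ≤ (2 / v_min) (e^γ - 1)`. -/
theorem hilbert_to_l1_bridge_range {d : ℕ} (hd : 1 ≤ d)
    (vmin vmax : ℝ) (hvmin : 0 < vmin) (hvmin2 : vmin ≤ 2) (hvmax : vmin ≤ vmax)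
    (x y : Fin d → ℝ)
    (hx : ∀ j, vmin ≤ x j ∧ x j ≤ vmax) (hy : ∀ j, vmin ≤ y j ∧ y j ≤ vmax)
    (γ : ℝ) (hγ : 0 ≤ γ) (hdH : hilbertDist x y ≤ γ) :
    ∑ j, |normalizeVec x j - normalizeVec y j| ≤
      (2 / vmin) * (Real.exp γ - 1) := by
  have : Nonempty (Fin d) := ⟨0, hd⟩
  grw [hilbert_to_l1_bridge_range_general (fun j => hvmin.trans_le (hx j).1)
    (fun j => hvmin.trans_le (hy j).1), hdH]
  exact le_mul_of_one_le_left (sub_nonneg.2 (Real.one_le_exp hγ)) ((one_le_div hvmin).2 hvmin2)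
end
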